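/- Let 5 ≤ r ≤ 8 and let (e1,…,er) and (f1,…,fr) be r-tuples of roots with e_i·e_j = 0 and f_i·f_j = 0 for all i ≠ j. Then there exists w ∈ W with w(e_i) = f_i for all i ∈ {1,…,r} if and only if for all 1 ≤ i < j < k < l ≤ r there exists w' ∈ W with w'(e_i) = f_i, w'(e_j) = f_j, w'(e_k) = f_k and w'(e_l) = f_l. -/

import Mathlib

noncomputable section

/-- The standard dot product on ℝ^8. -/
def dot (a b : Fin 8 → ℝ) : ℝ := ∑ i, a i * b i

/-- Membership in the E8 lattice Λ: all coordinates are integers or all lie in ℤ + 1/2,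
and the coordinates sum to an even integer. -/
def inLambda (a : Fin 8 → ℝ) : Prop :=
  ((∀ i, ∃ n : ℤ, a i = n) ∨ (∀ i, ∃ n : ℤ, a i = n + 1 / 2)) ∧
    ∃ n : ℤ, (∑ i, a i) = 2 * n

/-- The E8 root system E: lattice vectors of squared norm 2. -/
def isRoot (a : Fin 8 → ℝ) : Prop := inLambda a ∧ dot a a = 2

/-- The Weyl group W: linear isometries of ℝ^8 mapping the root system E onto itself. -/
def IsWeyl (w : (Fin 8 → ℝ) ≃ₗ[ℝ] (Fin 8 → ℝ)) : Prop :=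
  (∀ a b : Fin 8 → ℝ, dot (w a) (w b) = dot a b) ∧
    (⇑w '' {a | isRoot a} = {a | isRoot a})

/-!
Half-sums of pairwise orthogonal roots that lie in `Λ` link the roots together. Since `Λ / 2Λ` is a
nondegenerate quadratic space of dimension 8 over `𝔽₂`, five orthogonal roots are linearly dependent
modulo `2Λ`: some half-sum of them lies in `Λ`, and as `Λ` is even it involves exactly four of them.
On the other hand, of the four-element subsets of five orthogonal roots at most one has its
half-sum in `Λ`, so there is a set `Q` of four roots `eᵢ` whose half-sum is not in `Λ`.

Choose `w ∈ W` with `w eᵢ = fᵢ` on `Q`. For `m ∉ Q` there are three elements of `Q` that form with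
`e_m` a quadruple `T` whose half-sum is a root. If `w' ∈ W` maps `T` correctly, the images of that
root under `w` and `w'` differ by `(w e_m - f_m) / 2`, which therefore lies in `Λ`; evenness of `Λ`
forces `w e_m = ± f_m`. Reflections in the orthogonal roots `eᵢ` repair the signs.
-/

open Finset Matrix

section LinearAlgebra

lemma card_add_card_le_of_linearIndependent_of_dotProduct_eq_zero {K ι κ n : Type*} [Field K]
    [Fintype ι] [Fintype κ] [Fintype n] {v : ι → n → K} {w : κ → n → K}
    (hv : LinearIndependent K v) (hw : LinearIndependent K w) (h : ∀ i k, v i ⬝ᵥ w k = 0) :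
    Fintype.card ι + Fintype.card κ ≤ Fintype.card n := by
  have hmul : Matrix.of v * (Matrix.of w)ᵀ = 0 := Matrix.ext h
  have hle := Matrix.rank_add_rank_le_card_of_mul_eq_zero hmul
  rwa [Matrix.rank_transpose, LinearIndependent.rank_matrix (M := Matrix.of v) hv,
    LinearIndependent.rank_matrix (M := Matrix.of w) hw] at hle

lemma linearIndepOn_zmod_two_of_sum_eq_zero {ι M : Type*} [AddCommGroup M] [Module (ZMod 2) M]
    {v : ι → M} {S : Finset ι} (h : ∀ T ⊆ S, ∑ i ∈ T, v i = 0 → T = ∅) :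
    LinearIndepOn (ZMod 2) v (S : Set ι) := by
  rw [linearIndepOn_finset_iff]
  intro g hg
  have zero_or_one : ∀ x : ZMod 2, x = 0 ∨ x = 1 := by decide
  have hsupport : ∑ i ∈ S with g i ≠ 0, v i = 0 := by
    rw [← hg, sum_filter]
    refine sum_congr rfl fun i _ => ?_
    rcases zero_or_one (g i) with hi | hi <;> simp [hi]
  simpa [filter_eq_empty_iff] using h _ (filter_subset _ S) hsupport

variable {n : Type*} [Fintype n] [DecidableEq n] {B C : Matrix n n ℝ}

lemma eq_sum_dotProduct_smul_of_mul_transpose_eq_one (hBC : B * Cᵀ = 1) (x : n → ℝ) :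
    x = ∑ j, (x ⬝ᵥ C j) • B j := by
  calc x = x ᵥ* (Cᵀ * B) := by rw [mul_eq_one_comm.1 hBC, vecMul_one]
    _ = ∑ j, (x ⬝ᵥ C j) • B j := by rw [← vecMul_vecMul, vecMul_eq_sum]; rfl

lemma dotProduct_eq_sum_of_mul_transpose_eq_one (hBC : B * Cᵀ = 1) (x y : n → ℝ) :
    x ⬝ᵥ y = ∑ j, (x ⬝ᵥ C j) * (y ⬝ᵥ B j) := by
  conv_lhs => rw [eq_sum_dotProduct_smul_of_mul_transpose_eq_one hBC x, sum_dotProduct]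
  simp only [smul_dotProduct, smul_eq_mul, dotProduct_comm (B _) y]

end LinearAlgebra

section HalfSum

variable {ι n : Type*}

/-- Half the sum of the members of the family `v` indexed by `T`. The linear relations modulo `2L`
between vectors of a lattice `L` correspond to the half-sums that lie in `L`. -/
def halfSum (v : ι → n → ℝ) (T : Finset ι) : n → ℝ := (1 / 2 : ℝ) • ∑ i ∈ T, v i

lemma map_halfSum {F : Type*} [FunLike F (n → ℝ) (n → ℝ)] [LinearMapClass F ℝ (n → ℝ) (n → ℝ)]
    (w : F) (v : ι → n → ℝ) (T : Finset ι) :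
    w (halfSum v T) = halfSum (fun i => w (v i)) T := by
  simp only [halfSum, map_smul, map_sum]

lemma halfSum_dotProduct [Fintype n] (v : ι → n → ℝ) (T : Finset ι) (x : n → ℝ) :
    halfSum v T ⬝ᵥ x = 1 / 2 * ∑ i ∈ T, v i ⬝ᵥ x := by
  rw [halfSum, smul_dotProduct, sum_dotProduct, smul_eq_mul]

lemma halfSum_dotProduct_self [Fintype n] {v : ι → n → ℝ} (hnorm : ∀ i, v i ⬝ᵥ v i = 2)
    (horth : Pairwise fun i j => v i ⬝ᵥ v j = 0) (T : Finset ι) :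
    halfSum v T ⬝ᵥ halfSum v T = (#T : ℝ) / 2 := by
  have hone : ∀ i ∈ T, v i ⬝ᵥ halfSum v T = 1 := fun i hi => by
    rw [dotProduct_comm, halfSum_dotProduct,
      sum_eq_single_of_mem i hi fun j _ hji => horth hji, hnorm]
    norm_num
  rw [halfSum_dotProduct, sum_congr rfl hone, sum_const, nsmul_one]
  ring

variable [DecidableEq ι]

lemma halfSum_sub_halfSum_of_eqOn_erase {v v' : ι → n → ℝ} {T : Finset ι} {m : ι} (hm : m ∈ T)
    (h : ∀ i ∈ T.erase m, v i = v' i) :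
    halfSum v T - halfSum v' T = (1 / 2 : ℝ) • (v m - v' m) := by
  rw [halfSum, halfSum, ← smul_sub, ← add_sum_erase T v hm, ← add_sum_erase T v' hm,
    sum_congr rfl h, add_sub_add_right_eq_sub]

lemma halfSum_erase_sub_halfSum_erase (v : ι → n → ℝ) {S : Finset ι} {a b : ι} (ha : a ∈ S)
    (hb : b ∈ S) :
    halfSum v (S.erase a) - halfSum v (S.erase b) = (1 / 2 : ℝ) • (v b - v a) := by
  rw [halfSum, halfSum, ← smul_sub, sum_erase_eq_sub ha, sum_erase_eq_sub hb,
    sub_sub_sub_cancel_left]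

end HalfSum

section Lattice

variable {ι n : Type*} {L : AddSubgroup (n → ℝ)}

lemma intCast_smul_mem {a : n → ℝ} (ha : a ∈ L) (m : ℤ) : (m : ℝ) • a ∈ L := by
  rw [Int.cast_smul_eq_zsmul]
  exact L.zsmul_mem ha m

variable [Fintype n]

/-- An even lattice: the squared norms of its vectors are even integers. -/
def IsEvenLattice (L : AddSubgroup (n → ℝ)) : Prop := ∀ a ∈ L, ∃ m : ℤ, a ⬝ᵥ a = 2 * m

/-- A unimodular lattice: it is integral and contains a basis of the ambient space (the rows of `B`)
together with the dual basis (the rows of `C`). -/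
structure IsUnimodularLattice [DecidableEq n] (L : AddSubgroup (n → ℝ)) : Prop where
  exists_dotProduct_eq_intCast : ∀ a ∈ L, ∀ b ∈ L, ∃ m : ℤ, a ⬝ᵥ b = m
  exists_dual_bases : ∃ B C : Matrix n n ℝ, (∀ j, B j ∈ L) ∧ (∀ j, C j ∈ L) ∧ B * Cᵀ = 1

section Unimodular

variable [DecidableEq n] {B C : Matrix n n ℝ} {v : ι → n → ℝ} {c : ι → n → ℤ}

lemma halfSum_mem_of_two_dvd (hB : ∀ j, B j ∈ L) (hBC : B * Cᵀ = 1)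
    (hc : ∀ i j, v i ⬝ᵥ C j = c i j) {T : Finset ι} (hT : ∀ j, 2 ∣ ∑ i ∈ T, c i j) :
    halfSum v T ∈ L := by
  rw [eq_sum_dotProduct_smul_of_mul_transpose_eq_one hBC (halfSum v T)]
  refine L.sum_mem fun j _ => ?_
  obtain ⟨t, ht⟩ := hT j
  have hcoord : halfSum v T ⬝ᵥ C j = t := by
    simp only [halfSum_dotProduct, hc]
    rw [← Int.cast_sum, ht]
    push_cast
    ring
  rw [hcoord]
  exact intCast_smul_mem (hB j) t

lemma linearIndepOn_zmod_two_of_halfSum_mem (hB : ∀ j, B j ∈ L) (hBC : B * Cᵀ = 1)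
    (hc : ∀ i j, v i ⬝ᵥ C j = c i j) {S : Finset ι} (hS : ∀ T ⊆ S, halfSum v T ∈ L → T = ∅) :
    LinearIndepOn (ZMod 2) (fun i j => (c i j : ZMod 2)) (S : Set ι) := by
  refine linearIndepOn_zmod_two_of_sum_eq_zero fun T hTS hT => hS T hTS ?_
  refine halfSum_mem_of_two_dvd hB hBC hc fun j => ?_
  rw [← Nat.cast_ofNat, ← ZMod.intCast_zmod_eq_zero_iff_dvd _ 2]
  simpa using congrFun hT j

-- The coordinates modulo 2 in the two bases would be independent and orthogonal to one another.
lemma IsUnimodularLattice.exists_halfSum_mem (hL : IsUnimodularLattice L) (hv : ∀ i, v i ∈ L)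
    (heven : ∀ i k, ∃ m : ℤ, v i ⬝ᵥ v k = 2 * m) {S : Finset ι}
    (hS : Fintype.card n < 2 * #S) : ∃ T ⊆ S, T.Nonempty ∧ halfSum v T ∈ L := by
  obtain ⟨B, C, hB, hC, hBC⟩ := hL.exists_dual_bases
  choose c hc using fun i j => hL.exists_dotProduct_eq_intCast (v i) (hv i) (C j) (hC j)
  choose d hd using fun i j => hL.exists_dotProduct_eq_intCast (v i) (hv i) (B j) (hB j)
  have hCB : C * Bᵀ = 1 := by simpa using congrArg transpose hBC
  have horth : ∀ i k, (fun j => (c i j : ZMod 2)) ⬝ᵥ (fun j => (d k j : ZMod 2)) = 0 := by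
    intro i k
    obtain ⟨m, hm⟩ := heven i k
    rw [dotProduct_eq_sum_of_mul_transpose_eq_one hBC] at hm
    simp only [hc, hd] at hm
    have hsum : ∑ j, c i j * d k j = 2 * m := by exact_mod_cast hm
    have hdvd := (ZMod.intCast_zmod_eq_zero_iff_dvd (∑ j, c i j * d k j) 2).2 ⟨m, hsum⟩
    simpa [dotProduct] using hdvd
  by_contra! hno
  have hno' : ∀ T ⊆ S, halfSum v T ∈ L → T = ∅ := fun T hTS hT =>
    not_nonempty_iff_eq_empty.1 fun hne => hno T hTS hne hT
  have hle := card_add_card_le_of_linearIndependent_of_dotProduct_eq_zero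
    (linearIndepOn_zmod_two_of_halfSum_mem hB hBC hc hno')
    (linearIndepOn_zmod_two_of_halfSum_mem hC hCB hd hno') fun i k => horth i k
  simp only [coe_sort_coe, Fintype.card_coe] at hle
  omega

end Unimodular

namespace IsEvenLattice

variable (hL : IsEvenLattice L)
include hL

lemma exists_dotProduct_eq_intCast {a b : n → ℝ} (ha : a ∈ L) (hb : b ∈ L) :
    ∃ m : ℤ, a ⬝ᵥ b = m := by
  obtain ⟨k, hk⟩ := hL a ha
  obtain ⟨l, hl⟩ := hL b hb
  obtain ⟨m, hm⟩ := hL (a + b) (L.add_mem ha hb)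
  refine ⟨m - k - l, ?_⟩
  simp only [add_dotProduct, dotProduct_add, dotProduct_comm b a] at hm
  push_cast
  linarith

lemma eq_or_eq_neg_of_half_sub_mem {a b : n → ℝ} (ha : a ⬝ᵥ a = 2) (hb : b ⬝ᵥ b = 2)
    (h : (1 / 2 : ℝ) • (a - b) ∈ L) : a = b ∨ a = -b := by
  obtain ⟨m, hm⟩ := hL _ h
  have hsub : (a - b) ⬝ᵥ (a - b) = 8 * m := by
    rw [smul_dotProduct, dotProduct_smul, smul_eq_mul, smul_eq_mul] at hm
    linarith
  have hadd : (a + b) ⬝ᵥ (a + b) = 8 * (1 - m) := by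
    simp only [sub_dotProduct, dotProduct_sub, ha, hb, dotProduct_comm b a] at hsub
    simp only [add_dotProduct, dotProduct_add, ha, hb, dotProduct_comm b a]
    linarith
  have hnonneg : ∀ x : n → ℝ, 0 ≤ x ⬝ᵥ x := fun x => sum_nonneg fun i _ => mul_self_nonneg (x i)
  have hm_nonneg : (0 : ℝ) ≤ m := by linarith [hnonneg (a - b)]
  have hm_le_one : (m : ℝ) ≤ 1 := by linarith [hnonneg (a + b)]
  obtain rfl | rfl : m = 0 ∨ m = 1 := by
    norm_cast at hm_nonneg hm_le_one
    omega
  · exact .inl (sub_eq_zero.1 (dotProduct_self_eq_zero.1 (by simpa using hsub)))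
  · exact .inr (eq_neg_of_add_eq_zero_left (dotProduct_self_eq_zero.1 (by simpa using hadd)))

variable {v : ι → n → ℝ} (hnorm : ∀ i, v i ⬝ᵥ v i = 2)
  (horth : Pairwise fun i j => v i ⬝ᵥ v j = 0)
include hnorm horth

lemma four_dvd_card_of_halfSum_mem {T : Finset ι} (hT : halfSum v T ∈ L) : 4 ∣ #T := by
  obtain ⟨m, hm⟩ := hL _ hT
  rw [halfSum_dotProduct_self hnorm horth] at hm
  have hcard : (#T : ℤ) = 4 * m := by
    have : (#T : ℝ) = 4 * m := by linarith
    exact_mod_cast this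
  omega

-- The difference of the two half-sums would be a vector of norm 1.
lemma halfSum_erase_notMem [DecidableEq ι] {S : Finset ι} {a b : ι} (ha : a ∈ S) (hb : b ∈ S)
    (hab : a ≠ b) (h : halfSum v (S.erase a) ∈ L) : halfSum v (S.erase b) ∉ L := by
  intro h'
  obtain ⟨m, hm⟩ := hL _ (L.sub_mem h h')
  have hnorm_sub : (v b - v a) ⬝ᵥ (v b - v a) = 4 := by
    simp only [sub_dotProduct, dotProduct_sub, hnorm, horth hab, horth hab.symm]
    norm_num
  rw [halfSum_erase_sub_halfSum_erase v ha hb, smul_dotProduct, dotProduct_smul, hnorm_sub] at hm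
  have : (1 : ℤ) = 2 * m := by
    have : (1 : ℝ) = 2 * m := by rw [← hm]; norm_num
    exact_mod_cast this
  omega

end IsEvenLattice

end Lattice

section E8Lattice

lemma sum_eq_two_mul_iff {ι : Type*} [Fintype ι] {a : ι → ℝ} {p : ι → ℤ}
    (hp : ∀ i, a i = p i / 2) {k : ℤ} : ∑ i, a i = 2 * k ↔ ∑ i, p i = 4 * k := by
  rw [← Int.cast_inj (α := ℝ), sum_congr rfl fun i _ => hp i, ← sum_div]
  push_cast
  constructor <;> intro h <;> linarith

lemma forall_even_or_forall_odd {ι : Type*} {p : ι → ℤ} (hpar : ∀ i j, p i ≡ p j [ZMOD 2]) :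
    (∀ i, Even (p i)) ∨ ∀ i, Odd (p i) := by
  refine or_iff_not_imp_left.2 fun h i => ?_
  obtain ⟨j, hj⟩ := not_forall.1 h
  exact Int.odd_iff.2 (Eq.trans (hpar i j) (Int.odd_iff.1 (Int.not_even_iff_odd.1 hj)))

-- Doubling the coordinates treats the integral and the half-integral vectors uniformly.
lemma inLambda_iff_exists_int {a : Fin 8 → ℝ} : inLambda a ↔
    ∃ p : Fin 8 → ℤ, (∀ i, a i = p i / 2) ∧ (∀ i j, p i ≡ p j [ZMOD 2]) ∧ 4 ∣ ∑ i, p i := by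
  constructor
  · rintro ⟨h | h, k, hk⟩ <;> choose q hq using h
    · have hp : ∀ i, a i = (2 * q i : ℤ) / 2 := fun i => by rw [hq]; push_cast; ring
      exact ⟨_, hp, fun i j => by simp [Int.ModEq], k, (sum_eq_two_mul_iff hp).1 hk⟩
    · have hp : ∀ i, a i = (2 * q i + 1 : ℤ) / 2 := fun i => by rw [hq]; push_cast; ring
      exact ⟨_, hp, fun i j => by simp [Int.ModEq], k, (sum_eq_two_mul_iff hp).1 hk⟩
  · rintro ⟨p, hp, hpar, k, hk⟩
    refine ⟨(forall_even_or_forall_odd hpar).imp (fun heven i => ?_) (fun hodd i => ?_),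
      k, (sum_eq_two_mul_iff hp).2 hk⟩
    · obtain ⟨q, hq⟩ := heven i
      exact ⟨q, by rw [hp, hq]; push_cast; ring⟩
    · obtain ⟨q, hq⟩ := hodd i
      exact ⟨q, by rw [hp, hq]; push_cast; ring⟩

/-- The E8 lattice `Λ` as an additive subgroup. -/
def e8Lattice : AddSubgroup (Fin 8 → ℝ) where
  carrier := {a | inLambda a}
  zero_mem' := inLambda_iff_exists_int.2 ⟨0, by simp, by simp [Int.ModEq], by simp⟩
  add_mem' {a b} ha hb := by
    obtain ⟨p, hp, hpar, hsum⟩ := inLambda_iff_exists_int.1 ha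
    obtain ⟨q, hq, hqar, hqsum⟩ := inLambda_iff_exists_int.1 hb
    refine inLambda_iff_exists_int.2 ⟨p + q, fun i => ?_, fun i j => ?_, ?_⟩
    · rw [Pi.add_apply, hp, hq, Pi.add_apply]; push_cast; ring
    · exact (hpar i j).add (hqar i j)
    · simpa only [Pi.add_apply, sum_add_distrib] using dvd_add hsum hqsum
  neg_mem' {a} ha := by
    obtain ⟨p, hp, hpar, hsum⟩ := inLambda_iff_exists_int.1 ha
    refine inLambda_iff_exists_int.2 ⟨-p, fun i => ?_, fun i j => ?_, ?_⟩
    · rw [Pi.neg_apply, hp, Pi.neg_apply]; push_cast; ring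
    · exact (hpar i j).neg
    · simpa only [Pi.neg_apply, sum_neg_distrib, dvd_neg] using hsum

lemma mem_e8Lattice_iff_exists_int {a : Fin 8 → ℝ} : a ∈ e8Lattice ↔
    ∃ p : Fin 8 → ℤ, (∀ i, a i = p i / 2) ∧ (∀ i j, p i ≡ p j [ZMOD 2]) ∧ 4 ∣ ∑ i, p i :=
  inLambda_iff_exists_int

lemma eight_dvd_sum_mul_self {p : Fin 8 → ℤ} (hpar : ∀ i j, p i ≡ p j [ZMOD 2])
    (hsum : 4 ∣ ∑ i, p i) : 8 ∣ ∑ i, p i * p i := by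
  rcases forall_even_or_forall_odd hpar with heven | hodd
  · have hterm : ∀ i, 8 ∣ p i * p i - 2 * p i := fun i => by
      obtain ⟨q, hq⟩ := heven i
      obtain ⟨t, ht⟩ := Int.even_mul_pred_self q
      exact ⟨t, by rw [hq]; linear_combination 4 * ht⟩
    have hdvd := dvd_sum fun i (_ : i ∈ univ) => hterm i
    rw [sum_sub_distrib, ← mul_sum] at hdvd
    omega
  · have hterm : ∀ i, 8 ∣ p i * p i - 1 := fun i => by
      simpa only [sq] using Int.eight_dvd_sq_sub_one_of_odd (hodd i)
    have hdvd := dvd_sum fun i (_ : i ∈ univ) => hterm i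
    simpa [sum_sub_distrib] using hdvd

lemma isEvenLattice_e8Lattice : IsEvenLattice e8Lattice := by
  intro a ha
  obtain ⟨p, hp, hpar, hsum⟩ := mem_e8Lattice_iff_exists_int.1 ha
  obtain ⟨m, hm⟩ := eight_dvd_sum_mul_self hpar hsum
  refine ⟨m, ?_⟩
  have hm' : ∑ i, (p i : ℝ) * p i = 8 * m := by exact_mod_cast hm
  calc a ⬝ᵥ a = (∑ i, (p i : ℝ) * p i) / 4 := by
        rw [dotProduct, sum_div]
        exact sum_congr rfl fun i _ => by rw [hp]; ring
    _ = 2 * m := by rw [hm']; ring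

/-- The simple roots of E8 in Bourbaki's numbering, as rows. All entries are doubled, to keep them
integral. -/
def twoSimpleRoots : Matrix (Fin 8) (Fin 8) ℤ :=
  !![1, -1, -1, -1, -1, -1, -1, 1; 2, 2, 0, 0, 0, 0, 0, 0; -2, 2, 0, 0, 0, 0, 0, 0;
    0, -2, 2, 0, 0, 0, 0, 0; 0, 0, -2, 2, 0, 0, 0, 0; 0, 0, 0, -2, 2, 0, 0, 0;
    0, 0, 0, 0, -2, 2, 0, 0; 0, 0, 0, 0, 0, -2, 2, 0]

/-- The fundamental weights of E8, dual to the simple roots, as rows with all entries doubled. -/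
def twoFundamentalWeights : Matrix (Fin 8) (Fin 8) ℤ :=
  !![0, 0, 0, 0, 0, 0, 0, 4; 1, 1, 1, 1, 1, 1, 1, 5; -1, 1, 1, 1, 1, 1, 1, 7;
    0, 0, 2, 2, 2, 2, 2, 10; 0, 0, 0, 2, 2, 2, 2, 8; 0, 0, 0, 0, 2, 2, 2, 6;
    0, 0, 0, 0, 0, 2, 2, 4; 0, 0, 0, 0, 0, 0, 2, 2]

lemma twoSimpleRoots_mul_transpose_twoFundamentalWeights :
    twoSimpleRoots * twoFundamentalWeightsᵀ = 4 := by decide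

lemma half_row_mem_e8Lattice {P : Matrix (Fin 8) (Fin 8) ℤ}
    (hpar : ∀ j i k, P j i ≡ P j k [ZMOD 2]) (hsum : ∀ j, 4 ∣ ∑ i, P j i) (j : Fin 8) :
    ((1 / 2 : ℝ) • P.map (Int.cast : ℤ → ℝ)) j ∈ e8Lattice :=
  mem_e8Lattice_iff_exists_int.2
    ⟨P j, fun i => by simp [div_eq_inv_mul], hpar j, hsum j⟩

lemma isUnimodularLattice_e8Lattice : IsUnimodularLattice e8Lattice where
  exists_dotProduct_eq_intCast _ ha _ hb :=
    isEvenLattice_e8Lattice.exists_dotProduct_eq_intCast ha hb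
  exists_dual_bases := by
    refine ⟨(1 / 2 : ℝ) • twoSimpleRoots.map (Int.castRingHom ℝ),
      (1 / 2 : ℝ) • twoFundamentalWeights.map (Int.castRingHom ℝ),
      half_row_mem_e8Lattice (by decide) (by decide),
      half_row_mem_e8Lattice (by decide) (by decide), ?_⟩
    rw [transpose_smul, smul_mul_smul_comm, ← transpose_map, ← Matrix.map_mul,
      twoSimpleRoots_mul_transpose_twoFundamentalWeights]
    ext i j
    simp only [Matrix.smul_apply, Matrix.map_apply, Matrix.ofNat_apply, Matrix.one_apply]
    split_ifs <;> norm_num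

end E8Lattice

section Roots

variable {ι : Type*} {e : ι → Fin 8 → ℝ}

lemma isRoot.dotProduct_self {a : Fin 8 → ℝ} (ha : isRoot a) : a ⬝ᵥ a = 2 := ha.2

variable (he : ∀ i, isRoot (e i)) (heo : Pairwise fun i j => e i ⬝ᵥ e j = 0)
include he heo

lemma isRoot_halfSum {T : Finset ι} (hT : #T = 4) (h : halfSum e T ∈ e8Lattice) :
    isRoot (halfSum e T) := by
  refine ⟨h, (halfSum_dotProduct_self (fun i => (he i).dotProduct_self) heo T).trans ?_⟩
  rw [hT]
  norm_num

lemma exists_isRoot_halfSum_of_card_eq_five {S : Finset ι} (hS : #S = 5) :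
    ∃ T ⊆ S, #T = 4 ∧ isRoot (halfSum e T) := by
  have heven : ∀ i k, ∃ m : ℤ, e i ⬝ᵥ e k = 2 * m := fun i k => by
    obtain rfl | hik := eq_or_ne i k
    · exact ⟨1, by rw [(he i).dotProduct_self]; norm_num⟩
    · exact ⟨0, by rw [heo hik]; norm_num⟩
  obtain ⟨T, hTS, hne, hT⟩ := isUnimodularLattice_e8Lattice.exists_halfSum_mem
    (fun i => (he i).1) heven (S := S) (by simp [hS])
  have hdvd := isEvenLattice_e8Lattice.four_dvd_card_of_halfSum_mem
    (fun i => (he i).dotProduct_self) heo hT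
  have hle := card_le_card hTS
  have hpos := hne.card_pos
  have hcard : #T = 4 := by omega
  exact ⟨T, hTS, hcard, isRoot_halfSum he heo hcard hT⟩

lemma exists_not_isRoot_halfSum_of_card_eq_five {S : Finset ι} (hS : #S = 5) :
    ∃ Q ⊆ S, #Q = 4 ∧ ¬ isRoot (halfSum e Q) := by
  classical
  have card_erase : ∀ a ∈ S, #(S.erase a) = 4 := fun a ha => by rw [card_erase_of_mem ha, hS]
  obtain ⟨a, ha, b, hb, hab⟩ := one_lt_card.1 (show 1 < #S by omega)
  by_cases hroot : isRoot (halfSum e (S.erase a))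
  · have hnot :=
      isEvenLattice_e8Lattice.halfSum_erase_notMem
        (fun i => (he i).dotProduct_self) heo ha hb hab hroot.1
    exact ⟨S.erase b, erase_subset b S, card_erase b hb, fun h => hnot h.1⟩
  · exact ⟨S.erase a, erase_subset a S, card_erase a ha, hroot⟩

lemma exists_isRoot_halfSum_of_not_isRoot_halfSum [DecidableEq ι] {Q : Finset ι} (hQ : #Q = 4)
    (hroot : ¬ isRoot (halfSum e Q)) {m : ι} (hm : m ∉ Q) :
    ∃ T, m ∈ T ∧ T.erase m ⊆ Q ∧ #T = 4 ∧ isRoot (halfSum e T) := by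
  obtain ⟨T, hTS, hT, hTroot⟩ := exists_isRoot_halfSum_of_card_eq_five he heo
    (show #(insert m Q) = 5 by rw [card_insert_of_notMem hm, hQ])
  refine ⟨T, by_contra fun hmT => hroot ?_, subset_insert_iff.1 hTS, hT, hTroot⟩
  have hTQ : T ⊆ Q := (subset_insert_iff_of_notMem hmT).1 hTS
  rwa [← eq_of_subset_of_card_le hTQ (by omega)]

end Roots

section Weyl

variable {w w' : (Fin 8 → ℝ) ≃ₗ[ℝ] (Fin 8 → ℝ)}

lemma isWeyl_refl : IsWeyl (LinearEquiv.refl ℝ (Fin 8 → ℝ)) := ⟨fun _ _ => rfl, Set.image_id _⟩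

lemma IsWeyl.trans (hw : IsWeyl w) (hw' : IsWeyl w') : IsWeyl (w.trans w') :=
  ⟨fun a b => (hw'.1 (w a) (w b)).trans (hw.1 a b),
    (Set.image_comp w' w _).trans (by rw [hw.2, hw'.2])⟩

lemma IsWeyl.isRoot_apply (hw : IsWeyl w) {a : Fin 8 → ℝ} (ha : isRoot a) : isRoot (w a) :=
  hw.2.subset (Set.mem_image_of_mem w ha)

namespace isRoot

variable {a : Fin 8 → ℝ} (ha : isRoot a)

/-- The reflection `x ↦ x - (x · a) a` in the hyperplane orthogonal to a root `a`. -/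
def reflection : (Fin 8 → ℝ) ≃ₗ[ℝ] (Fin 8 → ℝ) :=
  Module.reflection (x := a) (f := dotProductEquiv ℝ (Fin 8) a)
    (by rw [dotProductEquiv_apply_apply, ha.dotProduct_self])

lemma reflection_apply (x : Fin 8 → ℝ) : ha.reflection x = x - (x ⬝ᵥ a) • a := by
  rw [reflection, Module.reflection_apply, dotProductEquiv_apply_apply, dotProduct_comm]

lemma reflection_apply_self : ha.reflection a = -a :=
  Module.reflection_apply_self _

lemma reflection_apply_of_dotProduct_eq_zero {x : Fin 8 → ℝ} (hx : x ⬝ᵥ a = 0) :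
    ha.reflection x = x := by
  rw [reflection_apply, hx, zero_smul, sub_zero]

lemma reflection_dotProduct_reflection (x y : Fin 8 → ℝ) :
    ha.reflection x ⬝ᵥ ha.reflection y = x ⬝ᵥ y := by
  simp only [reflection_apply, sub_dotProduct, dotProduct_sub, smul_dotProduct, dotProduct_smul,
    smul_eq_mul, ha.dotProduct_self, dotProduct_comm a]
  ring

lemma isRoot_reflection {x : Fin 8 → ℝ} (hx : isRoot x) : isRoot (ha.reflection x) := by
  refine ⟨?_, (ha.reflection_dotProduct_reflection x x).trans hx.dotProduct_self⟩
  obtain ⟨m, hm⟩ := isEvenLattice_e8Lattice.exists_dotProduct_eq_intCast hx.1 ha.1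
  rw [reflection_apply, hm]
  exact e8Lattice.sub_mem hx.1 (intCast_smul_mem ha.1 m)

lemma isWeyl_reflection : IsWeyl ha.reflection := by
  refine ⟨ha.reflection_dotProduct_reflection, Set.Subset.antisymm ?_ fun x hx => ?_⟩
  · rintro _ ⟨x, hx, rfl⟩
    exact ha.isRoot_reflection hx
  · exact ⟨ha.reflection x, ha.isRoot_reflection hx,
      Module.involutive_reflection _ x⟩

end isRoot

variable {ι : Type*} {e : ι → Fin 8 → ℝ}

lemma exists_isWeyl_neg_on (he : ∀ i, isRoot (e i)) (heo : Pairwise fun i j => e i ⬝ᵥ e j = 0)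
    (U : Finset ι) :
    ∃ s : (Fin 8 → ℝ) ≃ₗ[ℝ] (Fin 8 → ℝ), IsWeyl s ∧
      (∀ i ∈ U, s (e i) = -e i) ∧ ∀ i ∉ U, s (e i) = e i := by
  classical
  induction U using Finset.induction_on with
  | empty => exact ⟨.refl ℝ _, isWeyl_refl, by simp, by simp⟩
  | insert m U hm ih =>
    obtain ⟨s, hs, hneg, hfix⟩ := ih
    have hrefl : ∀ i ≠ m, (he m).reflection (e i) = e i := fun i him =>
      (he m).reflection_apply_of_dotProduct_eq_zero (heo him)
    refine ⟨s.trans (he m).reflection, hs.trans (he m).isWeyl_reflection,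
      fun i hi => ?_, fun i hi => ?_⟩
    · obtain rfl | hi := mem_insert.1 hi
      · rw [LinearEquiv.trans_apply, hfix i hm, isRoot.reflection_apply_self]
      · rw [LinearEquiv.trans_apply, hneg i hi, map_neg, hrefl i (ne_of_mem_of_not_mem hi hm)]
    · obtain ⟨him, hiU⟩ := not_or.1 (mem_insert.not.1 hi)
      rw [LinearEquiv.trans_apply, hfix i hiU, hrefl i him]

lemma IsWeyl.apply_eq_or_eq_neg_of_eqOn_erase [DecidableEq ι] (hw : IsWeyl w) (hw' : IsWeyl w')
    {m : ι} (he : isRoot (e m)) {T : Finset ι} (hm : m ∈ T) (hT : isRoot (halfSum e T))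
    (h : ∀ i ∈ T.erase m, w (e i) = w' (e i)) : w (e m) = w' (e m) ∨ w (e m) = -w' (e m) := by
  refine isEvenLattice_e8Lattice.eq_or_eq_neg_of_half_sub_mem
    (hw.isRoot_apply he).dotProduct_self (hw'.isRoot_apply he).dotProduct_self ?_
  rw [← halfSum_sub_halfSum_of_eqOn_erase hm h, ← map_halfSum, ← map_halfSum]
  exact e8Lattice.sub_mem (hw.isRoot_apply hT).1 (hw'.isRoot_apply hT).1

end Weyl

lemma forall_card_eq_four_iff {ι : Type*} [LinearOrder ι] {P : Finset ι → Prop} :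
    (∀ Q : Finset ι, #Q = 4 → P Q) ↔ ∀ i j k l, i < j → j < k → k < l → P {i, j, k, l} := by
  refine ⟨fun h i j k l hij hjk hkl => h _ ?_, fun h Q hQ => ?_⟩
  · rw [card_eq_four]
    exact ⟨i, j, k, l, hij.ne, (hij.trans hjk).ne, ((hij.trans hjk).trans hkl).ne, hjk.ne,
      (hjk.trans hkl).ne, hkl.ne, rfl⟩
  · have hlt : ∀ {x y : Fin 4}, x < y → Q.orderEmbOfFin hQ x < Q.orderEmbOfFin hQ y :=
      fun hxy => (Q.orderEmbOfFin hQ).strictMono hxy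
    have hP := h _ _ _ _ (hlt (show 0 < 1 by decide)) (hlt (show 1 < 2 by decide))
      (hlt (show 2 < 3 by decide))
    rwa [← image_singleton, ← image_insert, ← image_insert, ← image_insert,
      show ({0, 1, 2, 3} : Finset (Fin 4)) = univ from rfl, image_orderEmbOfFin_univ] at hP

theorem stmt_12_general {ι : Type*} [Fintype ι] (hι : 5 ≤ Fintype.card ι) {e f : ι → Fin 8 → ℝ}
    (he : ∀ i, isRoot (e i)) (heo : Pairwise fun i j => e i ⬝ᵥ e j = 0) :
    (∃ w : (Fin 8 → ℝ) ≃ₗ[ℝ] (Fin 8 → ℝ), IsWeyl w ∧ ∀ i, w (e i) = f i) ↔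
      ∀ Q : Finset ι, #Q = 4 →
        ∃ w : (Fin 8 → ℝ) ≃ₗ[ℝ] (Fin 8 → ℝ), IsWeyl w ∧ ∀ i ∈ Q, w (e i) = f i := by
  classical
  refine ⟨fun ⟨w, hw, hwe⟩ Q _ => ⟨w, hw, fun i _ => hwe i⟩, fun hquad => ?_⟩
  obtain ⟨S, -, hS⟩ := exists_subset_card_eq (s := (univ : Finset ι)) (n := 5) hι
  obtain ⟨Q, -, hQ, hQroot⟩ := exists_not_isRoot_halfSum_of_card_eq_five he heo hS
  obtain ⟨w, hw, hwQ⟩ := hquad Q hQ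
  have hsign : ∀ m, w (e m) = f m ∨ w (e m) = -f m := by
    intro m
    by_cases hm : m ∈ Q
    · exact .inl (hwQ m hm)
    obtain ⟨T, hmT, hTQ, hT, hTroot⟩ :=
      exists_isRoot_halfSum_of_not_isRoot_halfSum he heo hQ hQroot hm
    obtain ⟨w', hw', hwT⟩ := hquad T hT
    rw [← hwT m hmT]
    exact hw.apply_eq_or_eq_neg_of_eqOn_erase hw' (he m) hmT hTroot fun i hi =>
      (hwQ i (hTQ hi)).trans (hwT i (mem_of_mem_erase hi)).symm
  obtain ⟨s, hs, hneg, hfix⟩ := exists_isWeyl_neg_on he heo {i | w (e i) ≠ f i}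
  refine ⟨s.trans w, hs.trans hw, fun i => ?_⟩
  by_cases hi : w (e i) = f i
  · rw [LinearEquiv.trans_apply, hfix i (by simpa using hi), hi]
  · rw [LinearEquiv.trans_apply, hneg i (by simpa using hi), map_neg,
      (hsign i).resolve_left hi, neg_neg]

/-- For `5 ≤ r ≤ 8` and `r`-tuples `(e₁,…,e_r)`, `(f₁,…,f_r)` of
pairwise orthogonal roots, there is `w ∈ W` with `w(eᵢ) = fᵢ` for all `i` if and
only if for all `i < j < k < l` there is `w' ∈ W` sending `eᵢ, eⱼ, e_k, e_l` to
`fᵢ, fⱼ, f_k, f_l` respectively. -/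
theorem stmt_12 (r : ℕ) (hr5 : 5 ≤ r) (hr8 : r ≤ 8)
    (e f : Fin r → (Fin 8 → ℝ))
    (he : ∀ i, isRoot (e i)) (hf : ∀ i, isRoot (f i))
    (heo : ∀ i j, i ≠ j → dot (e i) (e j) = 0)
    (hfo : ∀ i j, i ≠ j → dot (f i) (f j) = 0) :
    (∃ w : (Fin 8 → ℝ) ≃ₗ[ℝ] (Fin 8 → ℝ), IsWeyl w ∧ ∀ i, w (e i) = f i) ↔
    (∀ i j k l : Fin r, i < j → j < k → k < l →
      ∃ w : (Fin 8 → ℝ) ≃ₗ[ℝ] (Fin 8 → ℝ), IsWeyl w ∧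
        w (e i) = f i ∧ w (e j) = f j ∧ w (e k) = f k ∧ w (e l) = f l) := by
  rw [stmt_12_general (by simpa) he fun i j hij => heo i j hij, forall_card_eq_four_iff]
  simp only [mem_insert, mem_singleton, forall_eq_or_imp, forall_eq]
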